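/- arXiv:quant-ph/0404046 — 2 statements merged into one kernel-verified Lean document; each statement's English description precedes it below -/
import Mathlib

section
/- Let y ∈ V^n be a probability vector with positive components. The following three statements are equivalent: (1) T(y) = S(y); (2) M(y) = S(y); (3) for every d with 1 < d < n−1, either y_d = y_1 or y_{d+1} = y_n. -/
noncomputable section

/-- `eSum x l` : the sum of the `l` largest components of `x`. -/
def eSum {n : ℕ} (x : Fin n → ℝ) (l : ℕ) : ℝ :=
  sSup {r | ∃ s : Finset (Fin n), s.card = l ∧ r = ∑ i ∈ s, x i}

/-- `ESum x l` : the sum of the `l` smallest components of `x`. -/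
def ESum {n : ℕ} (x : Fin n → ℝ) (l : ℕ) : ℝ :=
  sInf {r | ∃ s : Finset (Fin n), s.card = l ∧ r = ∑ i ∈ s, x i}

/-- Majorization `x ≺ y` (for vectors with equal total sum):
`e_l(x) ≤ e_l(y)` for all `1 ≤ l ≤ n`. -/
def Maj {n : ℕ} (x y : Fin n → ℝ) : Prop :=
  (∑ i, x i) = (∑ i, y i) ∧ ∀ l : ℕ, 1 ≤ l → l ≤ n → eSum x l ≤ eSum y l

/-- Strict majorization `x ◁ y`: equal total sums and `e_l(x) < e_l(y)` for all
`1 ≤ l ≤ n - 1`. -/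
def SMaj {n : ℕ} (x y : Fin n → ℝ) : Prop :=
  (∑ i, x i) = (∑ i, y i) ∧ ∀ l : ℕ, 1 ≤ l → l + 1 ≤ n → eSum x l < eSum y l

/-- Super-majorization `x ≺ʷ y` : `E_l(x) ≥ E_l(y)` for all `1 ≤ l ≤ n`. -/
def SupMaj {n : ℕ} (x y : Fin n → ℝ) : Prop :=
  ∀ l : ℕ, 1 ≤ l → l ≤ n → ESum y l ≤ ESum x l

/-- Strict super-majorization `x ◁ʷ y` : `E_l(x) > E_l(y)` for all `1 ≤ l ≤ n`. -/
def SSupMaj {n : ℕ} (x y : Fin n → ℝ) : Prop :=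
  ∀ l : ℕ, 1 ≤ l → l ≤ n → ESum y l < ESum x l

/-- Tensor product of two vectors: the vector of all pairwise products. -/
def tensor {m k : ℕ} (x : Fin m → ℝ) (c : Fin k → ℝ) : Fin (m * k) → ℝ :=
  fun i => x (finProdFinEquiv.symm i).1 * c (finProdFinEquiv.symm i).2

/-- `k`-fold tensor power of a vector. -/
def tpow {n : ℕ} (x : Fin n → ℝ) (k : ℕ) : Fin (n ^ k) → ℝ :=
  fun i => ∏ j : Fin k, x (finFunctionFinEquiv.symm i j)

/-- `V^n` : probability vectors with components in non-increasing order. -/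
def Vn (n : ℕ) : Set (Fin n → ℝ) :=
  {x | (∀ i, 0 ≤ x i) ∧ (∑ i, x i) = 1 ∧ Antitone x}

/-- `S(y)` : members of `V^n` majorized by `y`. -/
def Sset {n : ℕ} (y : Fin n → ℝ) : Set (Fin n → ℝ) :=
  {x ∈ Vn n | Maj x y}

/-- `T(y,c)` : members of `V^n` with `x ⊗ c ≺ y ⊗ c`. -/
def Tcat {n k : ℕ} (y : Fin n → ℝ) (c : Fin k → ℝ) : Set (Fin n → ℝ) :=
  {x ∈ Vn n | Maj (tensor x c) (tensor y c)}

/-- Local uniformity `l_u(c)` : the minimum of the consecutive ratios `c_{i+1}/c_i`. -/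
def lu {k : ℕ} (c : Fin k → ℝ) : ℝ :=
  sInf {r | ∃ i : ℕ, ∃ h : i + 1 < k, r = c ⟨i + 1, h⟩ / c ⟨i, Nat.lt_of_succ_lt h⟩}

/-- Global uniformity `g_u(c) = c_k / c_1` (smallest over largest component of a
non-increasingly ordered vector). -/
def gu {k : ℕ} (c : Fin k → ℝ) : ℝ :=
  if h : 0 < k then c ⟨k - 1, Nat.sub_lt h Nat.one_pos⟩ / c ⟨0, h⟩ else 1

/-- Largest component. -/
def maxc {n : ℕ} (x : Fin n → ℝ) : ℝ := sSup (Set.range x)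

/-- Smallest component. -/
def minc {n : ℕ} (x : Fin n → ℝ) : ℝ := sInf (Set.range x)

/-- `c'` is a (contiguous) segment of `c`. -/
def IsSegment {j k : ℕ} (c' : Fin j → ℝ) (c : Fin k → ℝ) : Prop :=
  ∃ (i : ℕ) (_h : i + j ≤ k), ∀ t : Fin j, c' t = c ⟨i + t, by have := t.isLt; omega⟩

/-- The first `d` components of a vector. -/
def take {n : ℕ} (x : Fin n → ℝ) (d : ℕ) (h : d ≤ n) : Fin d → ℝ :=
  fun i => x ⟨i, Nat.lt_of_lt_of_le i.isLt h⟩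

/-- The components of a vector after the first `d` ones. -/
def drop {n : ℕ} (x : Fin n → ℝ) (d : ℕ) : Fin (n - d) → ℝ :=
  fun i => x ⟨d + i, by have := i.isLt; omega⟩

/-- The segment `(c_i, …, c_j)` of `c` (`0`-based indices). -/
def seg {k : ℕ} (c : Fin k → ℝ) (i j : ℕ) (hij : i ≤ j) (hj : j < k) :
    Fin (j - i + 1) → ℝ :=
  fun t => c ⟨i + t, by have := t.isLt; omega⟩

/-- `(c_i, …, c_j)` is a block of the decomposition `[c]_α` of the (positive,
non-increasingly ordered) vector `c` according to `α`: ratios within the block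
exceed `α`, and the ratios at the two boundaries of the block are `≤ α`
(or the block touches an end of `c`). -/
def IsBlock {k : ℕ} (α : ℝ) (c : Fin k → ℝ) (i j : ℕ) : Prop :=
  ∃ (hij : i ≤ j) (hj : j < k),
    (i = 0 ∨ c ⟨i, by omega⟩ / c ⟨i - 1, by omega⟩ ≤ α) ∧
    (j = k - 1 ∨ ∃ hj1 : j + 1 < k, c ⟨j + 1, hj1⟩ / c ⟨j, hj⟩ ≤ α) ∧
    (∀ (t : ℕ) (ht1 : i ≤ t) (ht2 : t < j), α < c ⟨t + 1, by omega⟩ / c ⟨t, by omega⟩)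

/-- `T_k(y)` : states transformable to `y` with a `k`-dimensional catalyst. -/
def Tk {n : ℕ} (k : ℕ) (y : Fin n → ℝ) : Set (Fin n → ℝ) :=
  {x ∈ Vn n | ∃ c : Fin k → ℝ, (∀ i, 0 < c i) ∧ (∑ i, c i) = 1 ∧ Antitone c ∧
    Maj (tensor x c) (tensor y c)}

/-- `M_k(y)` : states `x` with `x^{⊗k} ≺ y^{⊗k}`. -/
def Mk {n : ℕ} (k : ℕ) (y : Fin n → ℝ) : Set (Fin n → ℝ) :=
  {x ∈ Vn n | Maj (tpow x k) (tpow y k)}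

/-- `T(y)` : states transformable to `y` with some catalyst. -/
def Tinf {n : ℕ} (y : Fin n → ℝ) : Set (Fin n → ℝ) :=
  {x ∈ Vn n | ∃ (k : ℕ) (c : Fin k → ℝ), 0 < k ∧ (∀ i, 0 < c i) ∧ (∑ i, c i) = 1 ∧
    Antitone c ∧ Maj (tensor x c) (tensor y c)}

/-- `M(y)` : states `x` with `x^{⊗k} ≺ y^{⊗k}` for some `k ≥ 1`. -/
def Minf {n : ℕ} (y : Fin n → ℝ) : Set (Fin n → ℝ) :=
  {x ∈ Vn n | ∃ k : ℕ, 1 ≤ k ∧ Maj (tpow x k) (tpow y k)}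

/-- `S^λ(y)` : states `x` with `x ≺ʷ λ y`. -/
def Slam {n : ℕ} (lam : ℝ) (y : Fin n → ℝ) : Set (Fin n → ℝ) :=
  {x ∈ Vn n | SupMaj x (fun i => lam * y i)}

/-- `T^λ(y,c)` : states `x` with `x ⊗ c ≺ʷ λ (y ⊗ c)`. -/
def Tlamc {n k : ℕ} (lam : ℝ) (y : Fin n → ℝ) (c : Fin k → ℝ) : Set (Fin n → ℝ) :=
  {x ∈ Vn n | SupMaj (tensor x c) (fun i => lam * tensor y c i)}

/-- `T_k^λ(y)`. -/
def Tklam {n : ℕ} (k : ℕ) (lam : ℝ) (y : Fin n → ℝ) : Set (Fin n → ℝ) :=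
  {x ∈ Vn n | ∃ c : Fin k → ℝ, (∀ i, 0 < c i) ∧ (∑ i, c i) = 1 ∧ Antitone c ∧
    SupMaj (tensor x c) (fun i => lam * tensor y c i)}

/-- `M_k^λ(y)`. -/
def Mklam {n : ℕ} (k : ℕ) (lam : ℝ) (y : Fin n → ℝ) : Set (Fin n → ℝ) :=
  {x ∈ Vn n | SupMaj (tpow x k) (fun i => lam ^ k * tpow y k i)}

/-- `T^λ(y)`. -/
def Tlaminf {n : ℕ} (lam : ℝ) (y : Fin n → ℝ) : Set (Fin n → ℝ) :=
  {x ∈ Vn n | ∃ (k : ℕ) (c : Fin k → ℝ), 0 < k ∧ (∀ i, 0 < c i) ∧ (∑ i, c i) = 1 ∧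
    Antitone c ∧ SupMaj (tensor x c) (fun i => lam * tensor y c i)}

/-- `M^λ(y)`. -/
def Mlaminf {n : ℕ} (lam : ℝ) (y : Fin n → ℝ) : Set (Fin n → ℝ) :=
  {x ∈ Vn n | ∃ k : ℕ, 1 ≤ k ∧ SupMaj (tpow x k) (fun i => lam ^ k * tpow y k i)}

/-- `K_d(y)` : concatenations `x = x' ⊕ x''` with `x' ◁ y'` and `x'' ◁ y''`,
where `y'` is the first-`d` part of `y` and `y''` the rest. -/
def Kd {n : ℕ} (y : Fin n → ℝ) (d : ℕ) (h : d ≤ n) : Set (Fin n → ℝ) :=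
  {x ∈ Vn n | SMaj (take x d h) (take y d h) ∧ SMaj (drop x d) (drop y d)}

/-- `y(d)` : first `d` components equal to `e_d(y)/d`, the last `n-d` equal to
`(1 - e_d(y))/(n-d)`. -/
def yvec {n : ℕ} (y : Fin n → ℝ) (d : ℕ) : Fin n → ℝ :=
  fun i => if (i : ℕ) < d then eSum y d / d else (1 - eSum y d) / (n - d)

/-- `K_d^λ(y)` : states `x ∈ S^λ(y)` with `E_l(x) = λ E_l(y)` iff `l = n - d`. -/
def Kdlam {n : ℕ} (lam : ℝ) (y : Fin n → ℝ) (d : ℕ) : Set (Fin n → ℝ) :=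
  {x ∈ Vn n | SupMaj x (fun i => lam * y i) ∧
    ∀ l : ℕ, 1 ≤ l → l ≤ n → (ESum x l = lam * ESum y l ↔ l = n - d)}

open Filter Topology

lemma le_eSum {N : ℕ} (u : Fin N → ℝ) (s : Finset (Fin N)) :
    ∑ i ∈ s, u i ≤ eSum u s.card := by
  refine le_csSup ⟨∑ i, |u i|, ?_⟩ ⟨s, rfl, rfl⟩
  rintro _ ⟨s', -, rfl⟩
  exact (Finset.sum_le_sum fun i _ => le_abs_self (u i)).trans
    (Finset.sum_le_sum_of_subset_of_nonneg (Finset.subset_univ _) fun i _ _ => abs_nonneg _)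

lemma eSum_le {N l : ℕ} (hl : l ≤ N) (u : Fin N → ℝ) (C : ℝ)
    (h : ∀ s : Finset (Fin N), s.card = l → ∑ i ∈ s, u i ≤ C) : eSum u l ≤ C := by
  obtain ⟨s, -, hs⟩ := Finset.exists_subset_card_eq (s := (Finset.univ : Finset (Fin N)))
    (n := l) (by simpa using hl)
  refine csSup_le ⟨_, s, hs, rfl⟩ ?_
  rintro _ ⟨s', hs', rfl⟩
  exact h s' hs'

lemma sum_le_card_mul_add {N : ℕ} (u : Fin N → ℝ) (s : Finset (Fin N)) (t : ℝ) :
    ∑ i ∈ s, u i ≤ s.card * t + ∑ i, max (u i - t) 0 := by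
  have h1 : ∑ i ∈ s, u i ≤ ∑ i ∈ s, (t + max (u i - t) 0) :=
    Finset.sum_le_sum fun i _ => by linarith [le_max_left (u i - t) 0]
  have h2 : ∑ i ∈ s, max (u i - t) 0 ≤ ∑ i, max (u i - t) 0 :=
    Finset.sum_le_sum_of_subset_of_nonneg (Finset.subset_univ _) fun i _ _ => le_max_right _ _
  rw [Finset.sum_add_distrib, Finset.sum_const, nsmul_eq_mul] at h1
  linarith

lemma card_mul_add_eq_sum {N : ℕ} (v : Fin N → ℝ) (s : Finset (Fin N)) (t : ℝ)
    (h1 : ∀ i ∈ s, t ≤ v i) (h2 : ∀ i ∉ s, v i ≤ t) :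
    s.card * t + ∑ i, max (v i - t) 0 = ∑ i ∈ s, v i := by
  have h : ∑ i ∈ s, max (v i - t) 0 = ∑ i, max (v i - t) 0 :=
    Finset.sum_subset (Finset.subset_univ _) fun i _ hi =>
      max_eq_right (by linarith [h2 i hi])
  rw [← h, Finset.sum_congr rfl fun i hi => max_eq_left (by linarith [h1 i hi] : 0 ≤ v i - t),
    Finset.sum_sub_distrib, Finset.sum_const, nsmul_eq_mul]
  ring

lemma exists_top_finset {N l : ℕ} (hl : 1 ≤ l) (hlN : l ≤ N) (v : Fin N → ℝ) :
    ∃ s : Finset (Fin N), s.card = l ∧ ∃ j, (∀ i ∈ s, v j ≤ v i) ∧ ∀ i ∉ s, v i ≤ v j := by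
  obtain ⟨s, hs, hmax⟩ := Finset.exists_max_image
    (Finset.powersetCard l (Finset.univ : Finset (Fin N))) (fun s => ∑ i ∈ s, v i)
    (Finset.powersetCard_nonempty.2 (by simpa using hlN))
  rw [Finset.mem_powersetCard_univ] at hs
  obtain ⟨j, hj, hmin⟩ := Finset.exists_min_image s v (Finset.card_pos.1 (by omega))
  refine ⟨s, hs, j, hmin, fun i hi => ?_⟩
  have hi' : i ∉ s.erase j := fun h => hi (Finset.mem_of_mem_erase h)
  have h := hmax (insert i (s.erase j)) (by
    rw [Finset.mem_powersetCard_univ, Finset.card_insert_of_notMem hi',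
      Finset.card_erase_of_mem hj]
    omega)
  simp only [Finset.sum_insert hi'] at h
  linarith [Finset.add_sum_erase s v hj]

lemma maj_of_sum_posPart_le {N : ℕ} {u v : Fin N → ℝ} (hs : ∑ i, u i = ∑ i, v i)
    (h : ∀ j, ∑ i, max (u i - v j) 0 ≤ ∑ i, max (v i - v j) 0) : Maj u v := by
  refine ⟨hs, fun l hl hlN => ?_⟩
  obtain ⟨s, rfl, j, h1, h2⟩ := exists_top_finset hl hlN v
  refine eSum_le hlN u _ fun s' hs' => ?_
  have e1 := sum_le_card_mul_add u s' (v j)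
  have e2 := card_mul_add_eq_sum v s (v j) h1 h2
  have e3 := le_eSum v s
  rw [hs'] at e1
  linarith [h j]

lemma Maj.le_of_forall_le {N : ℕ} {u v : Fin N → ℝ} (h : Maj u v) {C : ℝ}
    (hC : ∀ i, v i ≤ C) (i : Fin N) : u i ≤ C := by
  have hN : 1 ≤ N := i.pos
  have h1 := le_eSum u {i}
  have h2 := eSum_le hN v C fun s hs => by
    obtain ⟨j, rfl⟩ := Finset.card_eq_one.1 hs
    simpa using hC j
  simp only [Finset.sum_singleton, Finset.card_singleton] at h1
  linarith [h.2 1 le_rfl hN]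

lemma Maj.ge_of_forall_ge {N : ℕ} {u v : Fin N → ℝ} (h : Maj u v) {C : ℝ}
    (hC : ∀ i, C ≤ v i) (i : Fin N) : C ≤ u i := by
  have hN : 1 ≤ N := i.pos
  have hcard : (Finset.univ.erase i : Finset (Fin N)).card = N - 1 := by simp
  have hu := Finset.add_sum_erase Finset.univ u (Finset.mem_univ i)
  have h1 := le_eSum u (Finset.univ.erase i)
  rw [hcard] at h1
  have h2 : eSum v (N - 1) ≤ ∑ i, v i - C := eSum_le (by omega) v _ fun s hs => by
    have hc : sᶜ.card = 1 := by rw [Finset.card_compl, Fintype.card_fin]; omega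
    obtain ⟨j, hj⟩ := Finset.card_eq_one.1 hc
    have := Finset.sum_add_sum_compl s v
    rw [hj, Finset.sum_singleton] at this
    linarith [hC j]
  have h3 : eSum u (N - 1) ≤ eSum v (N - 1) := by
    rcases Nat.eq_zero_or_pos (N - 1) with h0 | h0
    · rw [h0]
      refine eSum_le (Nat.zero_le _) u _ fun s hs => ?_
      rw [Finset.card_eq_zero.1 hs]
      simpa using le_eSum v ∅
    · exact h.2 _ h0 (by omega)
  linarith [h.1]

lemma Maj.comp_equiv {m n : ℕ} {x y : Fin n → ℝ} (h : Maj x y) (e : Fin m ≃ Fin n) :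
    Maj (x ∘ e) (y ∘ e) := by
  obtain rfl : m = n := by simpa using Fintype.card_congr e
  refine ⟨by simpa [Equiv.sum_comp] using h.1, fun l hl hlN => ?_⟩
  refine eSum_le hlN _ _ fun s hs => ?_
  have h1 := le_eSum x (s.map e.toEmbedding)
  rw [Finset.card_map, hs] at h1
  have h2 : eSum y l ≤ eSum (y ∘ e) l := eSum_le hlN _ _ fun s' hs' => by
    have := le_eSum (y ∘ e) (s'.map e.symm.toEmbedding)
    simpa [hs'] using this
  have h3 := h.2 l hl hlN
  simp only [Finset.sum_map, Equiv.coe_toEmbedding] at h1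
  exact h1.trans (h3.trans h2)

lemma sum_tensor {m k : ℕ} (x : Fin m → ℝ) (c : Fin k → ℝ) (g : ℝ → ℝ) :
    ∑ i, g (tensor x c i) = ∑ p : Fin m × Fin k, g (x p.1 * c p.2) :=
  Equiv.sum_comp finProdFinEquiv.symm fun p : Fin m × Fin k => g (x p.1 * c p.2)

lemma sum_tpow {n k : ℕ} (x : Fin n → ℝ) (g : ℝ → ℝ) :
    ∑ i, g (tpow x k i) = ∑ f : Fin k → Fin n, g (∏ j, x (f j)) :=
  Equiv.sum_comp finFunctionFinEquiv.symm fun f : Fin k → Fin n => g (∏ j, x (f j))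

lemma Sset_subset_Tinf {n : ℕ} (y : Fin n → ℝ) : Sset y ⊆ Tinf y := by
  rintro x ⟨hx, h⟩
  refine ⟨hx, 1, fun _ => 1, one_pos, by simp, by simp, antitone_const, ?_⟩
  have := h.comp_equiv (finProdFinEquiv.symm.trans (Equiv.prodUnique (Fin n) (Fin 1)))
  convert this using 1 <;> (ext i; simp [tensor])

lemma Sset_subset_Minf {n : ℕ} (y : Fin n → ℝ) : Sset y ⊆ Minf y := by
  rintro x ⟨hx, h⟩
  refine ⟨hx, 1, le_rfl, ?_⟩
  have := h.comp_equiv (finFunctionFinEquiv.symm.trans (Equiv.funUnique (Fin 1) (Fin n)))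
  convert this using 1 <;> (ext i; simp [tpow])

lemma sum_posPart_le_of_const_on {ι : Type*} (s : Finset ι) (X Y : ι → ℝ) (t : ℝ)
    (hX : ∀ f ∈ s, ∀ g ∈ s, X f = X g) (hs : ∑ f ∈ s, X f = ∑ f ∈ s, Y f) :
    ∑ f ∈ s, max (X f - t) 0 ≤ ∑ f ∈ s, max (Y f - t) 0 ∧
      ∀ f ∈ s, ∀ g ∈ s, Y f < t → t < Y g →
        ∑ f ∈ s, max (X f - t) 0 < ∑ f ∈ s, max (Y f - t) 0 := by
  have key : (∀ f ∈ s, t ≤ X f) ∨ ∀ f ∈ s, X f ≤ t := by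
    by_cases h : ∃ f ∈ s, t ≤ X f
    · obtain ⟨f, hf, hft⟩ := h
      exact Or.inl fun g hg => hX f hf g hg ▸ hft
    · push Not at h
      exact Or.inr fun f hf => (h f hf).le
  rcases key with h | h
  · have e : ∑ f ∈ s, max (X f - t) 0 = ∑ f ∈ s, (Y f - t) := by
      rw [Finset.sum_congr rfl fun f hf => max_eq_left (sub_nonneg.2 (h f hf)),
        Finset.sum_sub_distrib, Finset.sum_sub_distrib, hs]
    rw [e]
    exact ⟨Finset.sum_le_sum fun f _ => le_max_left _ _, fun f hf g _ h1 _ =>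
      Finset.sum_lt_sum (fun f _ => le_max_left _ _) ⟨f, hf, lt_max_of_lt_right (by linarith)⟩⟩
  · have e : ∑ f ∈ s, max (X f - t) 0 = 0 :=
      Finset.sum_eq_zero fun f hf => max_eq_right (by linarith [h f hf])
    rw [e]
    exact ⟨Finset.sum_nonneg fun f _ => le_max_right _ _, fun f _ g hg _ h2 =>
      Finset.sum_pos' (fun f _ => le_max_right _ _) ⟨g, hg, lt_max_of_lt_left (by linarith)⟩⟩

lemma sum_posPart_lt_of_const_on_fibers {ι κ : Type*} [Fintype ι] [Fintype κ] [DecidableEq κ]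
    (π : ι → κ) (X Y : ι → ℝ) (hX : ∀ f g, π f = π g → X f = X g)
    (hs : ∀ p, ∑ f with π f = p, X f = ∑ f with π f = p, Y f) {t : ℝ} {f g : ι}
    (hfg : π f = π g) (hf : Y f < t) (hg : t < Y g) :
    ∑ i, max (X i - t) 0 < ∑ i, max (Y i - t) 0 := by
  rw [← Finset.sum_fiberwise _ π, ← Finset.sum_fiberwise _ π (fun i => max (Y i - t) 0)]
  have h : ∀ p, _ := fun p => sum_posPart_le_of_const_on
    (Finset.univ.filter fun i => π i = p) X Y t
    (fun f hf g hg => hX f g (by simp at hf hg; rw [hf, hg])) (hs p)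
  exact Finset.sum_lt_sum (fun p _ => (h p).1)
    ⟨π g, Finset.mem_univ _, (h (π g)).2 f (by simpa using hfg) g (by simp) hf hg⟩

lemma eventually_maj {N : ℕ} (u : ℝ → Fin N → ℝ) (v : Fin N → ℝ) (m M : ℝ)
    (hc : ∀ i, Continuous fun ε => u ε i) (hs : ∀ ε, ∑ i, u ε i = ∑ i, v i)
    (hM : ∀ᶠ ε in 𝓝[>] (0 : ℝ), ∀ i, u ε i ≤ M)
    (hm : ∀ᶠ ε in 𝓝[>] (0 : ℝ), ∀ i, m ≤ u ε i) (hmv : ∀ i, m ≤ v i)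
    (hv : ∀ j, m < v j → v j < M →
      ∑ i, max (u 0 i - v j) 0 < ∑ i, max (v i - v j) 0) :
    ∀ᶠ ε in 𝓝[>] (0 : ℝ), Maj (u ε) v := by
  have h : ∀ᶠ ε in 𝓝[>] (0 : ℝ), ∀ j, m < v j → v j < M →
      ∑ i, max (u ε i - v j) 0 < ∑ i, max (v i - v j) 0 := by
    refine eventually_all.2 fun j => ?_
    by_cases h1 : m < v j ∧ v j < M
    · have hcont : Continuous fun ε => ∑ i, max (u ε i - v j) 0 :=
        continuous_finsetSum _ fun i _ => ((hc i).sub continuous_const).max continuous_const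
      have := (hcont.tendsto 0).eventually (gt_mem_nhds (hv j h1.1 h1.2))
      exact (this.filter_mono nhdsWithin_le_nhds).mono fun ε h _ _ => h
    · exact Eventually.of_forall fun ε h2 h3 => absurd ⟨h2, h3⟩ h1
  filter_upwards [h, hM, hm] with ε h hM hm
  refine maj_of_sum_posPart_le (hs ε) fun j => ?_
  by_cases h2 : v j < M
  · rcases (hmv j).lt_or_eq with h1 | h1
    · exact (h j h1 h2).le
    · rw [← h1, Finset.sum_congr rfl fun i _ => max_eq_left (sub_nonneg.2 (hm i)),
        Finset.sum_congr rfl fun i _ => max_eq_left (sub_nonneg.2 (hmv i)),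
        Finset.sum_sub_distrib, Finset.sum_sub_distrib, hs]
  · rw [Finset.sum_eq_zero fun i _ => max_eq_right (by linarith [hM i])]
    exact Finset.sum_nonneg fun i _ => le_max_right _ _

lemma exists_average {ι : Type*} (s : Finset ι) (y : ι → ℝ) {lo hi : ℝ}
    (hlo : ∀ i ∈ s, lo ≤ y i) (hhi : ∀ i ∈ s, y i ≤ hi) {i j : ι} (hi' : i ∈ s) (hj : j ∈ s)
    (hylo : lo < y i) (hyhi : y j < hi) :
    ∃ a, ∑ _i ∈ s, a = ∑ i ∈ s, y i ∧ lo < a ∧ a < hi := by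
  have hpos : (0 : ℝ) < s.card := by exact_mod_cast Finset.card_pos.2 ⟨i, hi'⟩
  have h1 := Finset.sum_lt_sum hlo ⟨i, hi', hylo⟩
  have h2 := Finset.sum_lt_sum hhi ⟨j, hj, hyhi⟩
  simp only [Finset.sum_const, nsmul_eq_mul] at h1 h2
  refine ⟨(∑ i ∈ s, y i) / s.card, ?_, ?_, ?_⟩
  · rw [Finset.sum_const, nsmul_eq_mul]
    field_simp
  · rw [lt_div_iff₀ hpos]; linarith
  · rw [div_lt_iff₀ hpos]; linarith

/-- Consecutive overlapping intervals `(lo i, hi i)`, `i ≤ k`, cover `(lo 0, hi k)`. -/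
lemma exists_mem_overlapping {k : ℕ} {lo hi : ℕ → ℝ} {t : ℝ}
    (h : ∀ i < k, lo (i + 1) < hi i) (h0 : lo 0 < t) (hk : t < hi k) :
    ∃ i ≤ k, lo i < t ∧ t < hi i := by
  classical
  have hex : ∃ i, t < hi i := ⟨k, hk⟩
  have hle : Nat.find hex ≤ k := Nat.find_min' hex hk
  refine ⟨Nat.find hex, hle, ?_, Nat.find_spec hex⟩
  rcases Nat.eq_zero_or_pos (Nat.find hex) with h1 | h1
  · rwa [h1]
  · have h2 := Nat.find_min hex (Nat.sub_lt h1 one_pos)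
    have h3 := h (Nat.find hex - 1) (by omega)
    rw [Nat.sub_add_cancel h1] at h3
    linarith

/-- The indices below `d` (for `β = true`), respectively the remaining ones. -/
def block (n d : ℕ) (β : Bool) : Finset (Fin n) :=
  Finset.univ.filter fun i => decide ((i : ℕ) < d) = β

lemma mem_block {n d : ℕ} {β : Bool} {i : Fin n} :
    i ∈ block n d β ↔ decide ((i : ℕ) < d) = β := by
  simp [block]

lemma card_block_true {n d : ℕ} (hdn : d ≤ n) : (block n d true).card = d := by
  have : block n d true = (Finset.univ : Finset (Fin d)).map (Fin.castLEEmb hdn) := by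
    ext i
    simp only [mem_block, decide_eq_true_eq, Finset.mem_map, Finset.mem_univ, true_and]
    exact ⟨fun h => ⟨⟨i, h⟩, rfl⟩, fun ⟨j, hj⟩ => hj ▸ j.isLt⟩
  simp [this]

lemma sum_block_add_sum_block {n : ℕ} (d : ℕ) (x : Fin n → ℝ) :
    ∑ i ∈ block n d true, x i + ∑ i ∈ block n d false, x i = ∑ i, x i := by
  rw [← Finset.sum_filter_add_sum_filter_not Finset.univ (fun i : Fin n => (i : ℕ) < d)]
  simp [block]

/-- The two-level vector with value `a` on the first `d` entries and `b` on the others,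
with mass `ε` moved from the last entry to the first. -/
def twoLevel (n d : ℕ) (a b ε : ℝ) : Fin n → ℝ := fun i =>
  (if (i : ℕ) < d then a else b) + (if (i : ℕ) = 0 then ε else 0) -
    (if (i : ℕ) + 1 = n then ε else 0)

lemma continuous_twoLevel {n d : ℕ} (a b : ℝ) (i : Fin n) :
    Continuous fun ε => twoLevel n d a b ε i := by
  unfold twoLevel
  split_ifs <;> fun_prop

lemma sum_twoLevel {n d : ℕ} (hn : 0 < n) (a b ε : ℝ) :
    ∑ i, twoLevel n d a b ε i = ∑ i : Fin n, if (i : ℕ) < d then a else b := by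
  have h0 : ∑ i : Fin n, (if (i : ℕ) = 0 then ε else 0) = ε := by
    rw [Finset.sum_eq_single ⟨0, hn⟩]
    · simp
    · intro i _ h
      simp only [ne_eq, Fin.ext_iff] at h
      exact if_neg h
    · simp
  have h1 : ∑ i : Fin n, (if (i : ℕ) + 1 = n then ε else 0) = ε := by
    rw [Finset.sum_eq_single ⟨n - 1, by omega⟩]
    · simp; omega
    · intro i _ h
      simp only [ne_eq, Fin.ext_iff] at h
      exact if_neg (by omega)
    · simp
  simp only [twoLevel, Finset.sum_sub_distrib, Finset.sum_add_distrib, h0, h1]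
  ring

lemma twoLevel_bounds {n d : ℕ} {a b ε m M : ℝ} (hba : b ≤ a) (hε : 0 ≤ ε)
    (hm : m ≤ b - ε) (hM : a + ε ≤ M) (i : Fin n) :
    m ≤ twoLevel n d a b ε i ∧ twoLevel n d a b ε i ≤ M := by
  unfold twoLevel
  split_ifs <;> constructor <;> linarith

lemma antitone_twoLevel {n d : ℕ} (hd : 0 < d) (hdn : d < n) {a b ε : ℝ} (hba : b ≤ a)
    (hε : 0 ≤ ε) : Antitone (twoLevel n d a b ε) := by
  intro i j hij
  have hij' : (i : ℕ) ≤ j := hij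
  have := j.isLt
  unfold twoLevel
  split_ifs <;> first | linarith | omega

lemma sum_block_twoLevel {n d : ℕ} (hd : 0 < d) (hdn : d < n) (a b ε : ℝ) :
    ∑ i ∈ block n d true, twoLevel n d a b ε i = ∑ _i ∈ block n d true, a + ε := by
  have h0 : ∑ i ∈ block n d true, (if (i : ℕ) = 0 then ε else 0) = ε := by
    rw [Finset.sum_eq_single_of_mem ⟨0, by omega⟩ (by simpa [mem_block] using hd)]
    · simp
    · intro i _ h
      simp only [ne_eq, Fin.ext_iff] at h
      exact if_neg h
  conv_rhs => rw [← h0, ← Finset.sum_add_distrib]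
  refine Finset.sum_congr rfl fun i hi => ?_
  simp only [mem_block, decide_eq_true_eq] at hi
  have : ¬ (i : ℕ) + 1 = n := by omega
  simp [twoLevel, hi, this]

lemma twoLevel_zero {n d : ℕ} (a b : ℝ) (i : Fin n) :
    twoLevel n d a b 0 i = if (i : ℕ) < d then a else b := by
  simp [twoLevel]

lemma prod_ite_lt {k i : ℕ} (hi : i ≤ k) (A B : ℝ) :
    ∏ j : Fin k, (if (j : ℕ) < i then A else B) = A ^ i * B ^ (k - i) := by
  obtain ⟨m, rfl⟩ := Nat.exists_eq_add_of_le hi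
  simp [Fin.prod_univ_add]

lemma exists_ratio {p₁ p₂ q₁ q₂ : ℝ} (hp : p₂ < p₁) (hq : q₂ < q₁) (hp₂ : 0 < p₂)
    (hq₂ : 0 < q₂) :
    ∃ (r : ℝ) (K : ℕ), 0 < r ∧ r < 1 ∧ p₂ < p₁ * r ∧ q₂ < q₁ * r ∧ p₂ * r ^ K < q₁ := by
  have hp₁ : 0 < p₁ := hp₂.trans hp
  have hq₁ : 0 < q₁ := hq₂.trans hq
  obtain ⟨r, h1, h2⟩ := exists_between
    (max_lt ((div_lt_one hp₁).2 hp) ((div_lt_one hq₁).2 hq))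
  have h3 := (le_max_left _ _).trans_lt h1
  have h4 := (le_max_right _ _).trans_lt h1
  obtain ⟨K, hK⟩ := exists_pow_lt_of_lt_one (div_pos hq₁ hp₂) h2
  refine ⟨r, K, (div_pos hp₂ hp₁).trans h3, h2, ?_, ?_, ?_⟩
  · rw [div_lt_iff₀ hp₁] at h3; linarith
  · rw [div_lt_iff₀ hq₁] at h4; linarith
  · rw [lt_div_iff₀ hp₂] at hK; linarith

/-- `a` and `b` are strictly intermediate block averages of `y`, where `y` is not constant
on either block. -/
structure IsAveraged {n : ℕ} (y : Fin n → ℝ) (d : ℕ) (a b : ℝ) (p₁ p₂ q₁ q₂ : Fin n) :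
    Prop where
  pos : 0 < d
  lt : d < n
  sum_true : ∑ _i ∈ block n d true, a = ∑ i ∈ block n d true, y i
  sum_false : ∑ _i ∈ block n d false, b = ∑ i ∈ block n d false, y i
  ba : b ≤ a
  lt_p : a < y p₁
  q_lt : y q₂ < b
  p₁_lt : (p₁ : ℕ) < d
  p₂_lt : (p₂ : ℕ) < d
  q₁_ge : ¬ (q₁ : ℕ) < d
  q₂_ge : ¬ (q₂ : ℕ) < d
  p_lt : y p₂ < y p₁
  q₂_lt : y q₂ < y q₁
  q₂_pos : 0 < y q₂
  q₂_le : ∀ i, y q₂ ≤ y i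
  le_p₁ : ∀ i, y i ≤ y p₁

namespace IsAveraged

variable {n d : ℕ} {y : Fin n → ℝ} {a b : ℝ} {p₁ p₂ q₁ q₂ : Fin n}

lemma sum_block (h : IsAveraged y d a b p₁ p₂ q₁ q₂) (β : Bool) :
    ∑ i ∈ block n d β, twoLevel n d a b 0 i = ∑ i ∈ block n d β, y i := by
  cases β
  · rw [← h.sum_false]
    refine Finset.sum_congr rfl fun i hi => ?_
    rw [mem_block, decide_eq_false_iff_not] at hi
    rw [twoLevel_zero, if_neg hi]
  · rw [← h.sum_true]
    refine Finset.sum_congr rfl fun i hi => ?_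
    rw [mem_block, decide_eq_true_eq] at hi
    rw [twoLevel_zero, if_pos hi]

lemma sum_twoLevel_eq (h : IsAveraged y d a b p₁ p₂ q₁ q₂) (ε : ℝ) :
    ∑ i, twoLevel n d a b ε i = ∑ i, y i := by
  have hn : 0 < n := h.pos.trans h.lt
  rw [sum_twoLevel hn, ← sum_twoLevel hn a b 0, ← sum_block_add_sum_block d, h.sum_block,
    h.sum_block, sum_block_add_sum_block]

lemma eventually_bounds (h : IsAveraged y d a b p₁ p₂ q₁ q₂) :
    ∀ᶠ ε in 𝓝[>] (0 : ℝ), 0 < ε ∧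
      ∀ i, y q₂ ≤ twoLevel n d a b ε i ∧ twoLevel n d a b ε i ≤ y p₁ := by
  have h1 : ∀ᶠ ε in 𝓝[>] (0 : ℝ), ε < b - y q₂ :=
    (gt_mem_nhds (sub_pos.2 h.q_lt)).filter_mono nhdsWithin_le_nhds
  have h2 : ∀ᶠ ε in 𝓝[>] (0 : ℝ), ε < y p₁ - a :=
    (gt_mem_nhds (sub_pos.2 h.lt_p)).filter_mono nhdsWithin_le_nhds
  filter_upwards [h1, h2, self_mem_nhdsWithin] with ε h1 h2 h3
  exact ⟨h3, twoLevel_bounds h.ba (le_of_lt h3) (by linarith) (by linarith)⟩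

lemma notMem_Sset (h : IsAveraged y d a b p₁ p₂ q₁ q₂) (hy : Antitone y) {ε : ℝ}
    (hε : 0 < ε) : twoLevel n d a b ε ∉ Sset y := by
  rintro ⟨-, -, hmaj⟩
  have h1 := le_eSum (twoLevel n d a b ε) (block n d true)
  rw [sum_block_twoLevel h.pos h.lt, h.sum_true, card_block_true h.lt.le] at h1
  have h2 := card_mul_add_eq_sum y (block n d true) (y ⟨d - 1, by have := h.lt; omega⟩)
    (fun i hi => hy (by
      simp only [mem_block, decide_eq_true_eq] at hi
      rw [Fin.le_def]
      change (i : ℕ) ≤ d - 1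
      omega))
    (fun i hi => hy (by
      simp only [mem_block, decide_eq_true_eq] at hi
      rw [Fin.le_def]
      change d - 1 ≤ (i : ℕ)
      omega))
  have h3 : eSum y d ≤ ∑ i ∈ block n d true, y i := eSum_le h.lt.le y _ fun s hs => by
    rw [← h2, card_block_true h.lt.le]
    simpa [hs] using sum_le_card_mul_add y s (y ⟨d - 1, by have := h.lt; omega⟩)
  linarith [hmaj d h.pos h.lt.le]

lemma sum_posPart_tensor_lt (h : IsAveraged y d a b p₁ p₂ q₁ q₂) {k : ℕ} (c : Fin k → ℝ)
    {t : ℝ} {f g : Fin n} (q : Fin k) (hfg : decide ((f : ℕ) < d) = decide ((g : ℕ) < d))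
    (hf : y f * c q < t) (hg : t < y g * c q) :
    ∑ i, max (tensor (twoLevel n d a b 0) c i - t) 0 < ∑ i, max (tensor y c i - t) 0 := by
  refine (sum_tensor _ c fun z => max (z - t) 0).trans_lt
    (lt_of_lt_of_eq ?_ (sum_tensor y c fun z => max (z - t) 0).symm)
  refine sum_posPart_lt_of_const_on_fibers
    (fun p : Fin n × Fin k => (decide ((p.1 : ℕ) < d), p.2)) _ (fun p => y p.1 * c p.2)
    ?_ ?_ (f := (f, q)) (g := (g, q)) (by simpa using hfg) hf hg
  · rintro ⟨i, q⟩ ⟨j, q'⟩ hij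
    simp only [Prod.mk.injEq, decide_eq_decide] at hij
    simp only [twoLevel_zero, hij.1, hij.2]
  · rintro ⟨β, q⟩
    have : (Finset.univ.filter fun p : Fin n × Fin k =>
        (decide ((p.1 : ℕ) < d), p.2) = (β, q)) = block n d β ×ˢ {q} := by
      ext ⟨i, j⟩
      simp [mem_block, eq_comm]
    rw [this, Finset.sum_product, Finset.sum_product]
    simp only [Finset.sum_singleton, ← Finset.sum_mul, h.sum_block]

lemma sum_posPart_tpow_lt (h : IsAveraged y d a b p₁ p₂ q₁ q₂) {k : ℕ}
    {t : ℝ} {f g : Fin k → Fin n}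
    (hfg : ∀ j, decide ((f j : ℕ) < d) = decide ((g j : ℕ) < d))
    (hf : ∏ j, y (f j) < t) (hg : t < ∏ j, y (g j)) :
    ∑ i, max (tpow (twoLevel n d a b 0) k i - t) 0 < ∑ i, max (tpow y k i - t) 0 := by
  refine (sum_tpow _ fun z => max (z - t) 0).trans_lt
    (lt_of_lt_of_eq ?_ (sum_tpow y fun z => max (z - t) 0).symm)
  refine sum_posPart_lt_of_const_on_fibers
    (fun (f : Fin k → Fin n) j => decide ((f j : ℕ) < d)) _ (fun f => ∏ j, y (f j))
    ?_ ?_ (f := f) (g := g) (funext hfg) hf hg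
  · intro f g hfg
    refine Finset.prod_congr rfl fun j _ => ?_
    have := congrFun hfg j
    simp only [decide_eq_decide] at this
    simp only [twoLevel_zero, this]
  · intro β
    have : (Finset.univ.filter fun f : Fin k → Fin n =>
        (fun j => decide ((f j : ℕ) < d)) = β) =
        Fintype.piFinset fun j => block n d (β j) := by
      ext f
      simp [mem_block, funext_iff]
    rw [this, ← Finset.prod_univ_sum (fun j => block n d (β j)) fun _ i => twoLevel n d a b 0 i,
      ← Finset.prod_univ_sum (fun j => block n d (β j)) fun _ i => y i]
    simp only [h.sum_block]

lemma eventually_maj_tpow (h : IsAveraged y d a b p₁ p₂ q₁ q₂) :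
    ∃ k, 1 ≤ k ∧ ∀ᶠ ε in 𝓝[>] (0 : ℝ), Maj (tpow (twoLevel n d a b ε) k) (tpow y k) := by
  have hypos : ∀ i, 0 < y i := fun i => h.q₂_pos.trans_le (h.q₂_le i)
  obtain ⟨r, K, hr0, hr1, hrp, hrq, hK⟩ := exists_ratio h.p_lt h.q₂_lt (hypos p₂) h.q₂_pos
  refine ⟨K + 1, by omega, ?_⟩
  refine eventually_maj _ _ (y q₂ ^ (K + 1)) (y p₁ ^ (K + 1)) ?_ ?_ ?_ ?_ ?_ ?_
  · intro i
    exact continuous_finsetProd _ fun j _ => continuous_twoLevel a b _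
  · intro ε
    have e : ∀ x : Fin n → ℝ, ∑ i, tpow x (K + 1) i = ∏ _j : Fin (K + 1), ∑ i, x i := fun x => by
      rw [Finset.prod_univ_sum, Fintype.piFinset_univ]
      exact sum_tpow x id
    rw [e, e, h.sum_twoLevel_eq]
  · filter_upwards [h.eventually_bounds] with ε hε i
    have := Finset.prod_le_prod (s := (Finset.univ : Finset (Fin (K + 1))))
      (fun j _ => h.q₂_pos.le.trans (hε.2 (finFunctionFinEquiv.symm i j)).1)
      (fun j _ => (hε.2 (finFunctionFinEquiv.symm i j)).2)
    simpa [tpow] using this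
  · filter_upwards [h.eventually_bounds] with ε hε i
    have := Finset.prod_le_prod (s := (Finset.univ : Finset (Fin (K + 1))))
      (fun j _ => h.q₂_pos.le) (fun j _ => (hε.2 (finFunctionFinEquiv.symm i j)).1)
    simpa [tpow] using this
  · intro i
    have := Finset.prod_le_prod (s := (Finset.univ : Finset (Fin (K + 1))))
      (fun j _ => h.q₂_pos.le) (fun j _ => h.q₂_le (finFunctionFinEquiv.symm i j))
    simpa [tpow] using this
  · intro j hj1 hj2
    obtain ⟨i, hi, hi1, hi2⟩ := exists_mem_overlapping (k := K + 1)
      (lo := fun i => y p₂ ^ i * y q₂ ^ (K + 1 - i))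
      (hi := fun i => y p₁ ^ i * y q₁ ^ (K + 1 - i)) (t := tpow y (K + 1) j) (by
        intro i hi
        obtain ⟨m, rfl⟩ := Nat.exists_eq_add_of_le (Nat.lt_succ_iff.1 hi)
        have e1 : i + m + 1 - (i + 1) = m := by omega
        have e2 : i + m + 1 - i = m + 1 := by omega
        simp only [e1, e2]
        have hp := pow_le_pow_left₀ (hypos p₂).le hrp.le i
        have hq := pow_le_pow_left₀ (hypos q₂).le hrq.le m
        have hpp := pow_pos (hypos p₁) i
        have hqp := pow_pos (hypos q₁) m
        calc y p₂ ^ (i + 1) * y q₂ ^ m = y p₂ * (y p₂ ^ i * y q₂ ^ m) := by ring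
          _ ≤ y p₂ * ((y p₁ * r) ^ i * (y q₁ * r) ^ m) := by
              refine mul_le_mul_of_nonneg_left ?_ (hypos p₂).le
              exact mul_le_mul hp hq (pow_nonneg (hypos q₂).le m)
                (pow_nonneg (mul_nonneg (hypos p₁).le hr0.le) i)
          _ = y p₂ * r ^ (i + m) * (y p₁ ^ i * y q₁ ^ m) := by ring
          _ < y q₁ * (y p₁ ^ i * y q₁ ^ m) :=
              mul_lt_mul_of_pos_right hK (mul_pos hpp hqp)
          _ = y p₁ ^ i * y q₁ ^ (m + 1) := by ring) (by simpa using hj1) (by simpa using hj2)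
    rw [← prod_ite_lt hi] at hi1 hi2
    refine h.sum_posPart_tpow_lt (f := fun j => if (j : ℕ) < i then p₂ else q₂)
      (g := fun j => if (j : ℕ) < i then p₁ else q₁) (fun j => ?_) ?_ ?_
    · split_ifs <;> simp [h.p₁_lt, h.p₂_lt, h.q₁_ge, h.q₂_ge, -not_lt]
    · simpa only [apply_ite y] using hi1
    · simpa only [apply_ite y] using hi2

lemma eventually_maj_tensor (h : IsAveraged y d a b p₁ p₂ q₁ q₂) :
    ∃ (k : ℕ) (c : Fin k → ℝ), 0 < k ∧ (∀ i, 0 < c i) ∧ (∑ i, c i) = 1 ∧ Antitone c ∧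
      ∀ᶠ ε in 𝓝[>] (0 : ℝ), Maj (tensor (twoLevel n d a b ε) c) (tensor y c) := by
  have hypos : ∀ i, 0 < y i := fun i => h.q₂_pos.trans_le (h.q₂_le i)
  obtain ⟨r, K, hr0, hr1, hrp, hrq, hK⟩ := exists_ratio h.p_lt h.q₂_lt (hypos p₂) h.q₂_pos
  have hS : 0 < ∑ i : Fin (K + 1), r ^ (i : ℕ) :=
    Finset.sum_pos (fun i _ => pow_pos hr0 _) Finset.univ_nonempty
  obtain ⟨s, hs, hs0⟩ : ∃ s : ℝ, s * ∑ i : Fin (K + 1), r ^ (i : ℕ) = 1 ∧ 0 < s :=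
    ⟨_, inv_mul_cancel₀ hS.ne', inv_pos.2 hS⟩
  have hc0 : ∀ i, 0 < s * r ^ i := fun i => mul_pos hs0 (pow_pos hr0 i)
  have hanti : ∀ {i j : ℕ}, i ≤ j → s * r ^ j ≤ s * r ^ i := fun hij =>
    mul_le_mul_of_nonneg_left (pow_le_pow_of_le_one hr0.le hr1.le hij) hs0.le
  have hcK : ∀ i : Fin (K + 1), s * r ^ K ≤ s * r ^ (i : ℕ) := fun i =>
    hanti (Nat.lt_succ_iff.1 i.isLt)
  have hc1 : ∀ i : Fin (K + 1), s * r ^ (i : ℕ) ≤ s := fun i => by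
    simpa using hanti (Nat.zero_le (i : ℕ))
  have chain : ∀ {A B t : ℝ}, B < A * r → B * (s * r ^ K) < t → t < A * s →
      ∃ q : Fin (K + 1), B * (s * r ^ (q : ℕ)) < t ∧ t < A * (s * r ^ (q : ℕ)) := by
    intro A B t hBA h1 h2
    obtain ⟨i, hi, hi1, hi2⟩ := exists_mem_overlapping (k := K)
      (lo := fun i => B * (s * r ^ (K - i))) (hi := fun i => A * (s * r ^ (K - i))) (t := t) (by
        intro i hi
        have e : K - i = K - (i + 1) + 1 := by omega
        simp only [e]
        have := mul_lt_mul_of_pos_right hBA (hc0 (K - (i + 1)))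
        calc _ < _ := this
          _ = _ := by ring) (by simpa using h1) (by simpa using h2)
    exact ⟨⟨K - i, by omega⟩, hi1, hi2⟩
  refine ⟨K + 1, fun i => s * r ^ (i : ℕ), by omega, fun i => hc0 i, ?_, fun i j hij => hanti hij,
    ?_⟩
  · rw [← Finset.mul_sum, hs]
  refine eventually_maj _ _ (y q₂ * (s * r ^ K)) (y p₁ * s) ?_ ?_ ?_ ?_ ?_ ?_
  · intro i
    exact (continuous_twoLevel a b _).mul continuous_const
  · intro ε
    have e : ∀ x : Fin n → ℝ, ∑ i, tensor x (fun i : Fin (K + 1) => s * r ^ (i : ℕ)) i =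
        (∑ i, x i) * ∑ i : Fin (K + 1), s * r ^ (i : ℕ) := fun x => by
      rw [Finset.sum_mul_sum, ← Fintype.sum_prod_type']
      exact sum_tensor x _ id
    rw [e, e, h.sum_twoLevel_eq]
  · filter_upwards [h.eventually_bounds] with ε hε i
    exact mul_le_mul (hε.2 _).2 (hc1 _) (hc0 _).le (hypos p₁).le
  · filter_upwards [h.eventually_bounds] with ε hε i
    exact mul_le_mul (hε.2 _).1 (hcK _) (hc0 _).le (h.q₂_pos.le.trans (hε.2 _).1)
  · intro i
    exact mul_le_mul (h.q₂_le _) (hcK _) (hc0 _).le (hypos _).le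
  · intro j hj1 hj2
    generalize tensor y (fun i : Fin (K + 1) => s * r ^ (i : ℕ)) j = t at hj1 hj2 ⊢
    by_cases ht : y p₂ * (s * r ^ K) < t
    · obtain ⟨q, hq1, hq2⟩ := chain hrp ht hj2
      exact h.sum_posPart_tensor_lt _ q (by simp [h.p₁_lt, h.p₂_lt]) hq1 hq2
    · have ht' : t < y q₁ * s := by
        have := mul_lt_mul_of_pos_right hK hs0
        linarith
      obtain ⟨q, hq1, hq2⟩ := chain hrq hj1 ht'
      exact h.sum_posPart_tensor_lt _ q (by simp [h.q₁_ge, h.q₂_ge, -not_lt]) hq1 hq2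

lemma exists_mem (h : IsAveraged y d a b p₁ p₂ q₁ q₂) (hy : y ∈ Vn n) :
    ∃ x, x ∈ Tinf y ∧ x ∈ Minf y ∧ x ∉ Sset y := by
  obtain ⟨k, hk, hM⟩ := h.eventually_maj_tpow
  obtain ⟨k', c, hk', hc, hc1, hca, hT⟩ := h.eventually_maj_tensor
  obtain ⟨ε, hM, hT, hε, hb⟩ := (hM.and (hT.and h.eventually_bounds)).exists
  have hx : twoLevel n d a b ε ∈ Vn n :=
    ⟨fun i => h.q₂_pos.le.trans (hb i).1, (h.sum_twoLevel_eq ε).trans hy.2.1,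
      antitone_twoLevel h.pos h.lt h.ba hε.le⟩
  exact ⟨_, ⟨hx, k', c, hk', hc, hc1, hca, hT⟩, ⟨hx, k, hk, hM⟩, h.notMem_Sset hy.2.2 hε⟩

end IsAveraged

lemma exists_mem_of_gap {n d : ℕ} {y : Fin n → ℝ} (hy : y ∈ Vn n) (hypos : ∀ i, 0 < y i)
    (hd : 0 < d) (hdn : d < n)
    (hd' : d - 1 < n) (hn : 0 < n) (hn' : n - 1 < n)
    (h1 : y ⟨d - 1, hd'⟩ ≠ y ⟨0, hn⟩) (h2 : y ⟨d, hdn⟩ ≠ y ⟨n - 1, hn'⟩) :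
    ∃ x, x ∈ Tinf y ∧ x ∈ Minf y ∧ x ∉ Sset y := by
  have anti : ∀ {i j : ℕ} (hi : i < n) (hj : j < n), i ≤ j → y ⟨j, hj⟩ ≤ y ⟨i, hi⟩ :=
    fun hi hj hij => hy.2.2 (by simpa using hij)
  have hp := lt_of_le_of_ne (anti (by omega) (by omega) (Nat.zero_le (d - 1))) h1
  have hq := lt_of_le_of_ne (anti (i := d) (j := n - 1) hdn (by omega) (by omega)) h2.symm
  obtain ⟨a, ha, ha1, ha2⟩ := exists_average (block n d true) y
    (lo := y ⟨d - 1, hd'⟩) (hi := y ⟨0, hn⟩)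
    (fun i hi => anti i.isLt _ (by simp only [mem_block, decide_eq_true_eq] at hi; omega))
    (fun i _ => anti _ i.isLt (Nat.zero_le _))
    (i := ⟨0, hn⟩) (j := ⟨d - 1, hd'⟩)
    (by simpa [mem_block] using hd) (by simpa [mem_block] using hd) hp hp
  obtain ⟨b, hb, hb1, hb2⟩ := exists_average (block n d false) y
    (lo := y ⟨n - 1, hn'⟩) (hi := y ⟨d, hdn⟩)
    (fun i _ => anti i.isLt _ (by have := i.isLt; omega))
    (fun i hi => anti _ i.isLt (by simp only [mem_block, decide_eq_false_iff_not] at hi; omega))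
    (i := ⟨d, hdn⟩) (j := ⟨n - 1, hn'⟩)
    (by simp [mem_block]) (by simp [mem_block]; omega) hq hq
  have hpq : y ⟨d, hdn⟩ ≤ y ⟨d - 1, hd'⟩ := anti _ _ (by omega)
  refine IsAveraged.exists_mem (d := d) (a := a) (b := b) (p₁ := ⟨0, hn⟩)
    (p₂ := ⟨d - 1, hd'⟩) (q₁ := ⟨d, hdn⟩) (q₂ := ⟨n - 1, hn'⟩) ?_ hy
  exact
    { pos := hd
      lt := hdn
      sum_true := ha
      sum_false := hb
      ba := by linarith
      lt_p := ha2
      q_lt := hb1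
      p₁_lt := hd
      p₂_lt := by simp; omega
      q₁_ge := by simp
      q₂_ge := by simp; omega
      p_lt := hp
      q₂_lt := hq
      q₂_pos := hypos _
      q₂_le := fun i => anti i.isLt _ (by have := i.isLt; omega)
      le_p₁ := fun i => anti _ i.isLt (Nat.zero_le _) }

lemma mem_Sset_of_bounds {n : ℕ} {x y : Fin n → ℝ} (hn : 0 < n) (hn' : n - 1 < n) (hx : x ∈ Vn n) (hy : y ∈ Vn n)
    (hmax : ∀ i, x i ≤ y ⟨0, hn⟩) (hmin : ∀ i, y ⟨n - 1, hn'⟩ ≤ x i)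
    (h : ∀ (d : ℕ) (hd : d < n) (hd' : d - 1 < n), 1 < d → d + 1 < n →
      y ⟨d - 1, hd'⟩ = y ⟨0, hn⟩ ∨ y ⟨d, hd⟩ = y ⟨n - 1, hn'⟩) :
    x ∈ Sset y := by
  refine ⟨hx, hx.2.1.trans hy.2.1.symm, fun l hl hln => eSum_le hln x _ fun s hs => ?_⟩
  have hcase : (∀ i ∈ block n l true, y i ≥ y ⟨0, hn⟩) ∨
      ∀ i ∈ block n l false, y i ≤ y ⟨n - 1, hn'⟩ := by
    by_cases h1 : l = 1
    · left
      intro i hi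
      refine hy.2.2 ?_
      simp only [mem_block, decide_eq_true_eq] at hi
      rw [Fin.le_def]
      change (i : ℕ) ≤ 0
      omega
    by_cases h2 : n ≤ l + 1
    · right
      intro i hi
      refine hy.2.2 ?_
      simp only [mem_block, decide_eq_false_iff_not] at hi
      rw [Fin.le_def]
      change n - 1 ≤ (i : ℕ)
      omega
    refine (h l (by omega) (by omega) (by omega) (by omega)).imp (fun e i hi => ?_) (fun e i hi => ?_)
    · rw [← e]
      refine hy.2.2 ?_
      simp only [mem_block, decide_eq_true_eq] at hi
      rw [Fin.le_def]
      change (i : ℕ) ≤ l - 1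
      omega
    · rw [← e]
      refine hy.2.2 ?_
      simp only [mem_block, decide_eq_false_iff_not] at hi
      rw [Fin.le_def]
      change l ≤ (i : ℕ)
      omega
  have hle := le_eSum y (block n l true)
  rw [card_block_true hln] at hle
  refine le_trans ?_ hle
  rcases hcase with hc | hc
  · have e1 := Finset.sum_le_card_nsmul s x _ fun i _ => hmax i
    have e2 := Finset.card_nsmul_le_sum (block n l true) y _ hc
    rw [card_block_true hln] at e2
    rw [hs] at e1
    exact e1.trans e2
  · have hcard : sᶜ.card = (block n l false).card := by
      have := Finset.card_compl (block n l true)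
      rw [card_block_true hln] at this
      rw [Finset.card_compl, hs, ← this]
      congr 1
      ext i
      simp [mem_block]
    have e1 := Finset.card_nsmul_le_sum sᶜ x _ fun i _ => hmin i
    have e2 := Finset.sum_le_card_nsmul (block n l false) y _ hc
    rw [hcard] at e1
    have e3 := Finset.sum_add_sum_compl s x
    have e4 := sum_block_add_sum_block l y
    rw [hx.2.1] at e3
    rw [hy.2.1] at e4
    linarith

lemma bounds_of_mem_Tinf {n : ℕ} {x y : Fin n → ℝ} (hn : 0 < n) (hn' : n - 1 < n) (hy : y ∈ Vn n)
    (hx : x ∈ Tinf y) : ∀ i, y ⟨n - 1, hn'⟩ ≤ x i ∧ x i ≤ y ⟨0, hn⟩ := by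
  obtain ⟨hxV, k, c, hk, hc, -, hca, hmaj⟩ := hx
  have h0 : ∀ i, y i ≤ y ⟨0, hn⟩ := fun i => hy.2.2 (Nat.zero_le _)
  have h1 : ∀ i, y ⟨n - 1, hn'⟩ ≤ y i := fun i => hy.2.2 (Nat.le_sub_one_of_lt i.isLt)
  intro i
  constructor
  · have := hmaj.ge_of_forall_ge (C := y ⟨n - 1, hn'⟩ * c ⟨k - 1, by omega⟩)
      (fun j => mul_le_mul (h1 _) (hca (Nat.le_sub_one_of_lt (Fin.isLt _))) (hc _).le (hy.1 _))
      (finProdFinEquiv (i, ⟨k - 1, by omega⟩))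
    simp only [tensor, Equiv.symm_apply_apply] at this
    exact le_of_mul_le_mul_right this (hc _)
  · have := hmaj.le_of_forall_le (C := y ⟨0, hn⟩ * c ⟨0, hk⟩)
      (fun j => mul_le_mul (h0 _) (hca (Nat.zero_le _)) (hc _).le (hy.1 _))
      (finProdFinEquiv (i, ⟨0, hk⟩))
    simp only [tensor, Equiv.symm_apply_apply] at this
    exact le_of_mul_le_mul_right this (hc _)

lemma bounds_of_mem_Minf {n : ℕ} {x y : Fin n → ℝ} (hn : 0 < n) (hn' : n - 1 < n) (hy : y ∈ Vn n)
    (hx : x ∈ Minf y) : ∀ i, y ⟨n - 1, hn'⟩ ≤ x i ∧ x i ≤ y ⟨0, hn⟩ := by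
  obtain ⟨hxV, k, hk, hmaj⟩ := hx
  have h0 : ∀ i, y i ≤ y ⟨0, hn⟩ := fun i => hy.2.2 (Nat.zero_le _)
  have h1 : ∀ i, y ⟨n - 1, hn'⟩ ≤ y i := fun i => hy.2.2 (Nat.le_sub_one_of_lt i.isLt)
  intro i
  constructor
  · have := hmaj.ge_of_forall_ge (C := y ⟨n - 1, hn'⟩ ^ k)
      (fun j => by
        simpa [tpow] using Finset.prod_le_prod (s := (Finset.univ : Finset (Fin k)))
          (fun _ _ => hy.1 _) (fun j' _ => h1 (finFunctionFinEquiv.symm j j')))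
      (finFunctionFinEquiv fun _ => i)
    simp only [tpow, Equiv.symm_apply_apply, Finset.prod_const, Finset.card_univ,
      Fintype.card_fin] at this
    exact le_of_pow_le_pow_left₀ (by omega) (hxV.1 i) this
  · have := hmaj.le_of_forall_le (C := y ⟨0, hn⟩ ^ k)
      (fun j => by
        simpa [tpow] using Finset.prod_le_prod (s := (Finset.univ : Finset (Fin k)))
          (fun _ _ => hy.1 _) (fun j' _ => h0 (finFunctionFinEquiv.symm j j')))
      (finFunctionFinEquiv fun _ => i)
    simp only [tpow, Equiv.symm_apply_apply, Finset.prod_const, Finset.card_univ,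
      Fintype.card_fin] at this
    exact le_of_pow_le_pow_left₀ (by omega) (hy.1 _) this

/-- Theorem 6 of the paper. The equivalence of
`T(y) = S(y)`, `M(y) = S(y)`, and the condition `y_d = y_1` or `y_{d+1} = y_n`
for every `1 < d < n-1` (1-based indices in the informal statement). -/
theorem stmt5 {n : ℕ} (y : Fin n → ℝ) (hy : y ∈ Vn n) (hypos : ∀ i, 0 < y i) :
    (Tinf y = Sset y ↔ Minf y = Sset y) ∧
    (Tinf y = Sset y ↔ ∀ (d : ℕ) (hd1 : 1 < d) (hd2 : d + 1 < n),
      y ⟨d - 1, by omega⟩ = y ⟨0, by omega⟩ ∨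
      y ⟨d, by omega⟩ = y ⟨n - 1, by omega⟩) := by
  have hn : 0 < n := Nat.pos_of_ne_zero fun h => by
    subst h
    simpa using hy.2.1
  have hn' : n - 1 < n := Nat.sub_lt hn one_pos
  have key : ∀ A : Set (Fin n → ℝ), Sset y ⊆ A →
      (∀ x ∈ A, x ∈ Vn n ∧ ∀ i, y ⟨n - 1, hn'⟩ ≤ x i ∧ x i ≤ y ⟨0, hn⟩) →
      (∀ x, x ∈ Tinf y → x ∈ Minf y → x ∈ A) →
      (A = Sset y ↔ ∀ (d : ℕ) (hd1 : 1 < d) (hd2 : d + 1 < n),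
        y ⟨d - 1, by omega⟩ = y ⟨0, by omega⟩ ∨
        y ⟨d, by omega⟩ = y ⟨n - 1, by omega⟩) := by
    intro A hSA hA hTM
    constructor
    · intro hAS d hd1 hd2
      by_contra! hcon
      obtain ⟨x, hxT, hxM, hxS⟩ :=
        exists_mem_of_gap hy hypos (by omega) (by omega) (by omega) hn hn' hcon.1 hcon.2
      exact hxS (hAS ▸ hTM x hxT hxM)
    · intro h
      refine Set.Subset.antisymm (fun x hx => ?_) hSA
      obtain ⟨hxV, hb⟩ := hA x hx
      exact mem_Sset_of_bounds hn hn' hxV hy (fun i => (hb i).2) (fun i => (hb i).1)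
        fun d _ _ hd1 hd2 => h d hd1 hd2
  have hT := key (Tinf y) (Sset_subset_Tinf y)
    (fun x hx => ⟨hx.1, bounds_of_mem_Tinf hn hn' hy hx⟩) fun x h _ => h
  have hM := key (Minf y) (Sset_subset_Minf y)
    (fun x hx => ⟨hx.1, bounds_of_mem_Minf hn hn' hy hx⟩) fun x _ h => h
  exact ⟨hT.trans hM.symm, hT⟩


end
end

section
/- Let y be an m-dimensional and y' an n-dimensional nonnegative vector, and suppose x ◁ y and x' ◁ y'. Then the concatenation x⊕x' is strictly majorized by y⊕y' if and only if max y > min y' and max y' > min y. -/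
noncomputable section

theorem finite_subset_sums {n : ℕ} (x : Fin n → ℝ) (l : ℕ) :
    {r | ∃ s : Finset (Fin n), s.card = l ∧ r = ∑ i ∈ s, x i}.Finite :=
  (Set.finite_range fun s : Finset (Fin n) => ∑ i ∈ s, x i).subset <| by
    rintro _ ⟨s, -, rfl⟩
    exact ⟨s, rfl⟩

theorem sum_le_eSum {n : ℕ} (x : Fin n → ℝ) (s : Finset (Fin n)) :
    ∑ i ∈ s, x i ≤ eSum x s.card :=
  le_csSup (finite_subset_sums x _).bddAbove ⟨s, rfl, rfl⟩

theorem exists_eSum_eq_sum {n : ℕ} (x : Fin n → ℝ) {l : ℕ} (hl : l ≤ n) :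
    ∃ s : Finset (Fin n), s.card = l ∧ eSum x l = ∑ i ∈ s, x i := by
  obtain ⟨s, -, hs⟩ := Finset.exists_subset_card_eq
    (s := (Finset.univ : Finset (Fin n))) (by simpa using hl)
  exact Set.Nonempty.csSup_mem (by exact ⟨_, s, hs, rfl⟩) (finite_subset_sums x l)

theorem sum_append_map_disjSum {m p : ℕ} (x : Fin m → ℝ) (x' : Fin p → ℝ)
    (a : Finset (Fin m)) (b : Finset (Fin p)) :
    ∑ i ∈ (a.disjSum b).map finSumFinEquiv.toEmbedding, Fin.append x x' i =
      ∑ i ∈ a, x i + ∑ i ∈ b, x' i := by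
  simp [Finset.sum_map, Finset.sum_disjSum]

theorem sum_add_sum_le_eSum_append {m p : ℕ} (x : Fin m → ℝ) (x' : Fin p → ℝ)
    (a : Finset (Fin m)) (b : Finset (Fin p)) :
    ∑ i ∈ a, x i + ∑ i ∈ b, x' i ≤ eSum (Fin.append x x') (a.card + b.card) := by
  have h := sum_le_eSum (Fin.append x x') ((a.disjSum b).map finSumFinEquiv.toEmbedding)
  rwa [sum_append_map_disjSum, Finset.card_map, Finset.card_disjSum] at h

theorem exists_eSum_append_eq {m p : ℕ} (x : Fin m → ℝ) (x' : Fin p → ℝ) {l : ℕ}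
    (hl : l ≤ m + p) :
    ∃ (a : Finset (Fin m)) (b : Finset (Fin p)), a.card + b.card = l ∧
      eSum (Fin.append x x') l = ∑ i ∈ a, x i + ∑ i ∈ b, x' i := by
  obtain ⟨s, hs, hsum⟩ := exists_eSum_eq_sum (Fin.append x x') hl
  obtain ⟨u, rfl⟩ : ∃ u : Finset (Fin m ⊕ Fin p), u.map finSumFinEquiv.toEmbedding = s :=
    ⟨s.map finSumFinEquiv.symm.toEmbedding, by ext; simp⟩
  refine ⟨u.toLeft, u.toRight, ?_, ?_⟩
  · rw [Finset.card_toLeft_add_card_toRight, ← hs, Finset.card_map]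
  · rw [hsum, ← sum_append_map_disjSum, Finset.toLeft_disjSum_toRight]

theorem SMaj.exists_sum_le {n : ℕ} {x y : Fin n → ℝ} (h : SMaj x y) (a : Finset (Fin n)) :
    ∃ a' : Finset (Fin n), a'.card = a.card ∧ ∑ i ∈ a, x i ≤ ∑ i ∈ a', y i ∧
      (a.card ≠ 0 → a.card ≠ n → ∑ i ∈ a, x i < ∑ i ∈ a', y i) := by
  have hn : a.card ≤ n := by simpa using a.card_le_univ
  by_cases h0 : a.card = 0
  · exact ⟨a, rfl, by simp [Finset.card_eq_zero.1 h0], fun h => absurd h0 h⟩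
  by_cases h1 : a.card = n
  · have ha : a = Finset.univ := (Finset.card_eq_iff_eq_univ a).1 (by simpa using h1)
    exact ⟨a, rfl, by rw [ha, h.1], fun _ h => absurd h1 h⟩
  · obtain ⟨a', hc, he⟩ := exists_eSum_eq_sum y hn
    have hlt : ∑ i ∈ a, x i < ∑ i ∈ a', y i :=
      he ▸ (sum_le_eSum x a).trans_lt (h.2 _ (by omega) (by omega))
    exact ⟨a', hc, hlt.le, fun _ _ => hlt⟩

theorem sum_add_sum_le_sum_univ {m p : ℕ} {y : Fin m → ℝ} {y' : Fin p → ℝ} {c : ℝ}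
    (hy : ∀ i, y i ≤ c) (hy' : ∀ j, c ≤ y' j) (a : Finset (Fin m)) (b : Finset (Fin p))
    (hab : a.card + b.card = p) :
    ∑ i ∈ a, y i + ∑ j ∈ b, y' j ≤ ∑ j, y' j := by
  have hc : bᶜ.card = a.card := by
    rw [Finset.card_compl, Fintype.card_fin]
    omega
  have h1 := Finset.sum_le_card_nsmul a y c fun i _ => hy i
  have h2 := Finset.card_nsmul_le_sum bᶜ y' c fun j _ => hy' j
  rw [hc] at h2
  linarith [Finset.sum_add_sum_compl b y']

theorem sum_lt_sum_erase_add {m : ℕ} {y : Fin m → ℝ} {c : ℝ} {i : Fin m} (h : y i < c) :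
    ∑ k, y k < ∑ k ∈ Finset.univ.erase i, y k + c := by
  linarith [Finset.sum_erase_add Finset.univ y (Finset.mem_univ i)]

theorem le_maxc {n : ℕ} (y : Fin n → ℝ) (i : Fin n) : y i ≤ maxc y :=
  le_csSup (Set.finite_range y).bddAbove ⟨i, rfl⟩

theorem minc_le {n : ℕ} (y : Fin n → ℝ) (i : Fin n) : minc y ≤ y i :=
  csInf_le (Set.finite_range y).bddBelow ⟨i, rfl⟩

theorem exists_eq_maxc {n : ℕ} (hn : 0 < n) (y : Fin n → ℝ) : ∃ i, y i = maxc y :=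
  Set.Nonempty.csSup_mem ⟨_, Set.mem_range_self ⟨0, hn⟩⟩ (Set.finite_range y)

theorem exists_eq_minc {n : ℕ} (hn : 0 < n) (y : Fin n → ℝ) : ∃ i, y i = minc y :=
  Set.Nonempty.csInf_mem ⟨_, Set.mem_range_self ⟨0, hn⟩⟩ (Set.finite_range y)

/-- Lemma 2 of the paper. If `x ◁ y` and `x' ◁ y'`, then
`x ⊕ x' ◁ y ⊕ y'` iff `max y > min y'` and `max y' > min y`. -/
theorem stmt9 {m p : ℕ} (hm : 0 < m) (hp : 0 < p)
    (x y : Fin m → ℝ) (x' y' : Fin p → ℝ)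
    (hx : ∀ i, 0 ≤ x i) (hy : ∀ i, 0 ≤ y i)
    (hx' : ∀ i, 0 ≤ x' i) (hy' : ∀ i, 0 ≤ y' i)
    (h1 : SMaj x y) (h2 : SMaj x' y') :
    SMaj (Fin.append x x') (Fin.append y y') ↔
      (minc y' < maxc y ∧ minc y < maxc y') := by
  constructor
  · intro h
    constructor
    · by_contra! hle
      obtain ⟨a, b, hab, he⟩ := exists_eSum_append_eq y y' (Nat.le_add_left p m)
      have hlow := sum_add_sum_le_eSum_append x x' ∅ Finset.univ
      simp only [Finset.sum_empty, Finset.card_empty, zero_add, Finset.card_univ,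
        Fintype.card_fin] at hlow
      linarith [h.2 p hp (by omega), h2.1,
        sum_add_sum_le_sum_univ (fun i => (le_maxc y i).trans hle) (minc_le y') a b hab]
    · by_contra! hle
      obtain ⟨a, b, hab, he⟩ := exists_eSum_append_eq y y' (Nat.le_add_right m p)
      have hlow := sum_add_sum_le_eSum_append x x' Finset.univ ∅
      simp only [Finset.sum_empty, Finset.card_empty, add_zero, Finset.card_univ,
        Fintype.card_fin] at hlow
      linarith [h.2 m hm (by omega), h1.1,
        sum_add_sum_le_sum_univ (fun i => (le_maxc y' i).trans hle) (minc_le y) b a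
          (by omega)]
  · rintro ⟨hlt, hlt'⟩
    refine ⟨by simp [Fin.sum_univ_add, h1.1, h2.1], fun l hl hl' => ?_⟩
    obtain ⟨a, b, rfl, he⟩ := exists_eSum_append_eq x x' (l := l) (by omega)
    rw [he]
    obtain ⟨a', hca, hle, hs⟩ := h1.exists_sum_le a
    obtain ⟨b', hcb, hle', hs'⟩ := h2.exists_sum_le b
    have hup := sum_add_sum_le_eSum_append y y' a' b'
    rw [hca, hcb] at hup
    by_cases ha : a.card ≠ 0 ∧ a.card ≠ m
    · linarith [hs ha.1 ha.2]
    by_cases hb : b.card ≠ 0 ∧ b.card ≠ p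
    · linarith [hs' hb.1 hb.2]
    have hcases : a.card = m ∧ b.card = 0 ∨ a.card = 0 ∧ b.card = p := by omega
    rcases hcases with ⟨ha, hb⟩ | ⟨ha, hb⟩
    · have hau : a = Finset.univ := (Finset.card_eq_iff_eq_univ a).1 (by simpa using ha)
      have hbe := Finset.card_eq_zero.1 hb
      obtain ⟨i, hi⟩ := exists_eq_minc hm y
      obtain ⟨j, hj⟩ := exists_eq_maxc hp y'
      have hswap := sum_add_sum_le_eSum_append y y' (Finset.univ.erase i) {j}
      rw [Finset.sum_singleton, Finset.card_singleton,
        Finset.card_erase_add_one (Finset.mem_univ i), Finset.card_univ,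
        Fintype.card_fin] at hswap
      rw [ha, hb, add_zero, hau, hbe, Finset.sum_empty, add_zero, h1.1]
      exact (sum_lt_sum_erase_add (by rwa [hi, hj])).trans_le hswap
    · have hbu : b = Finset.univ := (Finset.card_eq_iff_eq_univ b).1 (by simpa using hb)
      have hae := Finset.card_eq_zero.1 ha
      obtain ⟨i, hi⟩ := exists_eq_maxc hm y
      obtain ⟨j, hj⟩ := exists_eq_minc hp y'
      have hswap := sum_add_sum_le_eSum_append y y' {i} (Finset.univ.erase j)
      rw [Finset.sum_singleton, Finset.card_singleton, add_comm 1,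
        Finset.card_erase_add_one (Finset.mem_univ j), Finset.card_univ,
        Fintype.card_fin, add_comm (y i)] at hswap
      rw [ha, hb, zero_add, hbu, hae, Finset.sum_empty, zero_add, h2.1]
      exact (sum_lt_sum_erase_add (by rwa [hi, hj])).trans_le hswap

end
end
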